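/- For all nonnegative integers a and b, ∫_0^{π/2} x^{2a+2} (1 - (2/π)x)^{2b+1} cot(x) dx = -2 · Σ_{n=0}^{∞} (ζ(2n)/π^{2n}) · ∫_0^{π/2} x^{2n+2a+1} (1 - (2/π)x)^{2b+1} dx; that is, the termwise integration of the cotangent series against x^{2a+1}(1-(2/π)x)^{2b+1} is valid, where ζ denotes the Riemann zeta function (with ζ(0) = -1/2 given by analytic continuation). -/

import Mathlib

/-!
On `(0, 1)` the Mittag-Leffler expansion of the cotangent gives
`1 - π y cot (π y) = ∑ₙ 2 y² / ((n + 1)² - y²)`. Expanding each term as a geometric series in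
`(y / (n + 1))²` produces a double series of nonnegative terms, so the order of summation may be
exchanged; the inner sums over `n` are then the values `ζ(2k)`, and
`∑ₖ ζ(2k) y ^ (2k) = -(π y cot (π y)) / 2` (`hasSum_zeta_mul_pow`), the term `k = 0` being
`ζ(0) = -1/2`.

Termwise integration follows from dominated convergence: for `0 < x ≤ π / 2` one has `x / π ≤ 1 / 2`,
so the `n`-th term is at most `|ζ(2n) (1/2) ^ (2n)| (π/2) ^ (2a+1)`, which is summable because the
power series converges at `y = 1/2`. The argument is carried out over `ℝ`, using that `ζ(2n)` is
real, and transferred to `ℂ` at the end.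
-/

open Real

lemma hasSum_of_eq {M : Type*} [AddCommMonoid M] [TopologicalSpace M] {f g : ℕ → M} {s t : M}
    (h : HasSum f s) (hfg : ∀ n, g n = f n) (hst : t = s) : HasSum g t := by
  rwa [funext hfg, hst]

lemma zeta_even (k : ℕ) :
    riemannZeta (2 * (k + 1 : ℕ)) = ((∑' n : ℕ, 1 / ((n : ℝ) + 1) ^ (2 * k + 2) : ℝ) : ℂ) := by
  rw [zeta_eq_tsum_one_div_nat_add_one_cpow (by norm_cast; omega), Complex.ofReal_tsum]
  refine tsum_congr fun n ↦ ?_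
  have h : (2 * ((k + 1 : ℕ) : ℂ)) = ((2 * k + 2 : ℕ) : ℂ) := by push_cast; ring
  rw [h, Complex.cpow_natCast]
  push_cast
  rfl

lemma zeta_even_ofReal (n : ℕ) : ((riemannZeta (2 * n)).re : ℂ) = riemannZeta (2 * n) := by
  cases n with
  | zero => simp [riemannZeta_zero]
  | succ k => rw [zeta_even, Complex.ofReal_re]

/-- Mittag-Leffler expansion of the cotangent on `(0, 1)`, over the reals. -/
lemma hasSum_cot {y : ℝ} (h0 : 0 < y) (h1 : y < 1) :
    HasSum (fun n : ℕ ↦ 2 * y ^ 2 / (((n : ℝ) + 1) ^ 2 - y ^ 2)) (1 - π * y * Real.cot (π * y)) := by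
  have hy : (y : ℂ) ∈ Complex.integerComplement := by
    rintro ⟨m, hm⟩
    have hm' : (m : ℝ) = y := by exact_mod_cast hm
    have a : (0 : ℝ) < m := hm' ▸ h0
    have b : (m : ℝ) < 1 := hm' ▸ h1
    have a' : 0 < m := by exact_mod_cast a
    have b' : m < 1 := by exact_mod_cast b
    omega
  have hs := (summable_cotTerm hy).hasSum
  have he := cot_series_rep' hy
  rw [show (∑' n : ℕ, (1 / ((y : ℂ) - (n + 1)) + 1 / (y + (n + 1)))) = ∑' n, cotTerm (y : ℂ) n
    from rfl] at he
  rw [← he] at hs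
  have hs' := hs.mul_left (-(y : ℂ))
  rw [← Complex.hasSum_ofReal]
  have hyC : (y : ℂ) ≠ 0 := by exact_mod_cast h0.ne'
  refine hasSum_of_eq (hs') (fun n ↦ ?_) ?_
  · have hn : (0 : ℝ) ≤ n := n.cast_nonneg
    have e1 : (y : ℂ) - (n + 1) ≠ 0 := by
      have : y - (n + 1) ≠ 0 := by linarith
      exact_mod_cast this
    have e2 : (y : ℂ) + (n + 1) ≠ 0 := by
      have : y + (n + 1) ≠ 0 := by positivity
      exact_mod_cast this
    have e3 : ((n : ℂ) + 1) ^ 2 - y ^ 2 ≠ 0 := by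
      rw [show ((n : ℂ) + 1) ^ 2 - y ^ 2 = -((y - (n + 1)) * (y + (n + 1))) by ring]
      exact neg_ne_zero.mpr (mul_ne_zero e1 e2)
    simp only [cotTerm]
    push_cast
    field_simp
    ring
  · push_cast
    field_simp
    ring

/-- The cotangent power series `-(x cot x) / 2 = ∑ ζ(2n) (x / π) ^ (2n)`, in the variable
`y = x / π ∈ (0, 1)`. -/
lemma hasSum_zeta_mul_pow {y : ℝ} (h0 : 0 < y) (h1 : y < 1) :
    HasSum (fun n : ℕ ↦ (riemannZeta (2 * n)).re * y ^ (2 * n))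
      (-(π * y * Real.cot (π * y)) / 2) := by
  -- The double series, with the Mittag-Leffler index first and the geometric index second.
  set F : ℕ × ℕ → ℝ := fun p ↦ 2 * y ^ (2 * p.2 + 2) / ((p.1 : ℝ) + 1) ^ (2 * p.2 + 2) with hF
  have hfib (n : ℕ) : HasSum (fun k ↦ F (n, k)) (2 * y ^ 2 / (((n : ℝ) + 1) ^ 2 - y ^ 2)) := by
    have hn : (0 : ℝ) ≤ n := n.cast_nonneg
    have hlt : y < (n : ℝ) + 1 := by linarith
    have hr : (y / (n + 1)) ^ 2 < 1 := by
      apply pow_lt_one₀ (by positivity) _ (by norm_num)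
      rwa [div_lt_one (by positivity)]
    have hg := (hasSum_geometric_of_lt_one (by positivity) hr).mul_left (2 * (y / (n + 1)) ^ 2)
    have hd : ((n : ℝ) + 1) ^ 2 - y ^ 2 ≠ 0 := by nlinarith
    have hd' : 1 - (y / ((n : ℝ) + 1)) ^ 2 ≠ 0 := by linarith
    refine hasSum_of_eq (hg) (fun n ↦ ?_) ?_
    · simp only [hF, div_pow]
      rw [← pow_mul, ← pow_mul]
      field_simp
      ring
    · field_simp
  have hsum : Summable F := by
    rw [summable_prod_of_nonneg (fun p ↦ by positivity)]
    refine ⟨fun n ↦ (hfib n).summable, ?_⟩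
    simpa only [(hfib _).tsum_eq] using (hasSum_cot h0 h1).summable
  have htot : HasSum F (1 - π * y * Real.cot (π * y)) := by
    have := hsum.hasSum.prod_fiberwise hfib
    rw [← this.unique (hasSum_cot h0 h1)]
    exact hsum.hasSum
  have hswap := (Equiv.prodComm ℕ ℕ).hasSum_iff.mpr htot
  have hk := hswap.prod_fiberwise (fun k ↦ (hswap.summable.prod_factor k).hasSum)
  -- The term `ζ(0) = -1/2` is split off: the Dirichlet series only represents `ζ(2k)` for `k ≥ 1`.
  rw [← hasSum_nat_add_iff' 1]
  refine hasSum_of_eq (hk.mul_left (1 / 2)) (fun n ↦ ?_) ?_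
  · rw [zeta_even, Complex.ofReal_re, ← tsum_mul_right, ← tsum_mul_left]
    refine tsum_congr fun m ↦ ?_
    simp [hF]
    ring
  · simp [riemannZeta_zero]
    ring

/-- Termwise integration of the cotangent series against `x^{2a+1}(1-(2/π)x)^{2b+1}`. -/
theorem termwise_integration_even (a b : ℕ) :
    ((∫ x in (0 : ℝ)..(π / 2),
        x ^ (2 * a + 2) * (1 - (2 / π) * x) ^ (2 * b + 1) * Real.cot x : ℝ) : ℂ) =
      -2 * ∑' n : ℕ, riemannZeta (2 * n) / (π : ℂ) ^ (2 * n) *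
        ((∫ x in (0 : ℝ)..(π / 2),
            x ^ (2 * n + 2 * a + 1) * (1 - (2 / π) * x) ^ (2 * b + 1) : ℝ) : ℂ) := by
  have hpi := Real.pi_pos
  have key : HasSum (fun n : ℕ ↦ ∫ x in (0 : ℝ)..(π / 2), (riemannZeta (2 * n)).re / π ^ (2 * n) *
        (x ^ (2 * n + 2 * a + 1) * (1 - (2 / π) * x) ^ (2 * b + 1)))
      (∫ x in (0 : ℝ)..(π / 2),
        (-1 / 2) * (x ^ (2 * a + 2) * (1 - (2 / π) * x) ^ (2 * b + 1) * Real.cot x)) := by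
    have hhalf := (hasSum_zeta_mul_pow (y := 1 / 2) (by norm_num) (by norm_num)).summable.abs
    refine intervalIntegral.hasSum_integral_of_dominated_convergence
      (fun n _ ↦ |(riemannZeta (2 * n)).re * (1 / 2) ^ (2 * n)| * (π / 2) ^ (2 * a + 1))
      (fun n ↦ by fun_prop) ?_ (.of_forall fun _ _ ↦ hhalf.mul_right _) (by simp) ?_
    · refine fun n ↦ .of_forall fun x hx ↦ ?_
      rw [Set.uIoc_of_le (by positivity)] at hx
      obtain ⟨hx0, hx1⟩ := hx
      have hw : 2 / π * x ≤ 1 := by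
        rw [div_mul_eq_mul_div, div_le_one hpi]; linarith
      have hw0 : 0 ≤ 2 / π * x := by positivity
      have e : (riemannZeta (2 * n)).re / π ^ (2 * n) *
          (x ^ (2 * n + 2 * a + 1) * (1 - (2 / π) * x) ^ (2 * b + 1)) =
          (riemannZeta (2 * n)).re * (x / π) ^ (2 * n) *
            (x ^ (2 * a + 1) * (1 - (2 / π) * x) ^ (2 * b + 1)) := by
        rw [div_pow]; ring
      have hxp : x / π ≤ 1 / 2 := by rw [div_le_iff₀ hpi]; linarith
      rw [e, Real.norm_eq_abs, abs_mul, abs_mul, abs_mul (riemannZeta (2 * n)).re,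
        abs_of_nonneg (a := (x / π) ^ (2 * n)) (by positivity),
        abs_of_nonneg (a := (1 / 2 : ℝ) ^ (2 * n)) (by positivity), abs_mul,
        abs_of_nonneg (a := x ^ (2 * a + 1)) (by positivity),
        abs_of_nonneg (a := (1 - 2 / π * x) ^ (2 * b + 1)) (pow_nonneg (by linarith) _)]
      have h1 : (1 - 2 / π * x) ^ (2 * b + 1) ≤ 1 := pow_le_one₀ (by linarith) (by linarith)
      have h2 : x ^ (2 * a + 1) * (1 - 2 / π * x) ^ (2 * b + 1) ≤ (π / 2) ^ (2 * a + 1) :=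
        (mul_le_of_le_one_right (by positivity) h1).trans (by gcongr)
      gcongr
    · refine .of_forall fun x hx ↦ ?_
      rw [Set.uIoc_of_le (by positivity)] at hx
      obtain ⟨hx0, hx1⟩ := hx
      have h := (hasSum_zeta_mul_pow (y := x / π) (by positivity)
        (by rw [div_lt_one hpi]; linarith)).mul_right
          (x ^ (2 * a + 1) * (1 - (2 / π) * x) ^ (2 * b + 1))
      rw [mul_div_cancel₀ x hpi.ne'] at h
      refine hasSum_of_eq (h) (fun n ↦ ?_) ?_
      · rw [div_pow]; ring
      · ring
  simp only [intervalIntegral.integral_const_mul] at key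
  have hC := (Complex.hasSum_ofReal.mpr key).tsum_eq
  simp only [Complex.ofReal_mul, Complex.ofReal_div, Complex.ofReal_pow, zeta_even_ofReal] at hC
  rw [hC]
  push_cast
  ring
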